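/- Let A ∈ ℂ^{n×n} be Schur stable, and B, C, D matrices of compatible dimensions. The squared H∞ norm μ_∞ = sup{‖z‖₂² : x₀=0, x_{k+1}=Ax_k+Bw_k, z_k = Cx_k+Dw_k, ‖w‖₂²=1} satisfies μ_∞ < 1 if and only if there exists a Hermitian P such that [A*PA−P, A*PB; B*PA, B*PB] + [C*C, C*D; D*C, D*D − I] ≺ 0. -/

import Mathlib

open Matrix
open scoped ComplexOrder

/-- The squared `H∞` norm: supremum of the output energy over unit-energy disturbances. -/
noncomputable def muInfty {n m p : ℕ} (A : Matrix (Fin n) (Fin n) ℂ)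
    (B : Matrix (Fin n) (Fin m) ℂ) (C : Matrix (Fin p) (Fin n) ℂ)
    (D : Matrix (Fin p) (Fin m) ℂ) : ℝ :=
  sSup {r : ℝ | ∃ (w : ℕ → Fin m → ℂ) (x : ℕ → Fin n → ℂ) (z : ℕ → Fin p → ℂ),
    Summable (fun k => ∑ i, ‖w k i‖ ^ 2) ∧
    (∑' k, ∑ i, ‖w k i‖ ^ 2) = 1 ∧
    x 0 = 0 ∧ (∀ k, x (k + 1) = A.mulVec (x k) + B.mulVec (w k)) ∧
    (∀ k, z k = C.mulVec (x k) + D.mulVec (w k)) ∧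
    r = ∑' k, ∑ i, ‖z k i‖ ^ 2}

open Filter Topology
open scoped InnerProductSpace

/-- In a complex Banach algebra, the powers of an element of spectral radius `< 1` tend to `0`. -/
theorem tendsto_norm_pow_of_spectralRadius_lt_one {R : Type*} [NormedRing R] [NormedAlgebra ℂ R]
    [CompleteSpace R] {a : R} (ha : spectralRadius ℂ a < 1) :
    Tendsto (fun k : ℕ => ‖a ^ k‖) atTop (𝓝 0) := by
  obtain ⟨r, har, hr1⟩ := ENNReal.lt_iff_exists_nnreal_btwn.1 ha
  have hr : r < 1 := by exact_mod_cast hr1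
  have hev := (spectrum.pow_nnnorm_pow_one_div_tendsto_nhds_spectralRadius a).eventually_lt_const har
  have hle : ∀ᶠ k : ℕ in atTop, ‖a ^ k‖ ≤ (r : ℝ) ^ k := by
    filter_upwards [hev, eventually_gt_atTop 0] with k hk hk0
    rw [one_div, ENNReal.rpow_inv_lt_iff (by exact_mod_cast hk0), ENNReal.rpow_natCast] at hk
    exact_mod_cast hk.le
  exact squeeze_zero' (Eventually.of_forall fun _ => norm_nonneg _) hle
    (tendsto_pow_atTop_nhds_zero_of_lt_one r.2 hr)

section Hilbert

variable {X U Z : Type*} [NormedAddCommGroup X] [InnerProductSpace ℂ X]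
  [NormedAddCommGroup U] [InnerProductSpace ℂ U] [NormedAddCommGroup Z] [InnerProductSpace ℂ Z]

theorem norm_add_sq_le_young {E : Type*} [SeminormedAddCommGroup E] (u v : E) {t : ℝ}
    (ht : 0 < t) : ‖u + v‖ ^ 2 ≤ (1 + t) * ‖u‖ ^ 2 + (1 + t⁻¹) * ‖v‖ ^ 2 := by
  have h1 : ‖u + v‖ ^ 2 ≤ (‖u‖ + ‖v‖) ^ 2 := by gcongr; exact norm_add_le u v
  have h2 : 0 ≤ t⁻¹ * (t * ‖u‖ - ‖v‖) ^ 2 := by positivity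
  have h3 : t⁻¹ * (t * ‖u‖ - ‖v‖) ^ 2 = t * ‖u‖ ^ 2 - 2 * ‖u‖ * ‖v‖ + t⁻¹ * ‖v‖ ^ 2 := by
    field_simp
    ring
  nlinarith

theorem norm_apply_sq_le (T : X →L[ℂ] Z) (v : X) : ‖T v‖ ^ 2 ≤ ‖T‖ ^ 2 * ‖v‖ ^ 2 := by
  rw [← mul_pow]
  gcongr
  exact T.le_opNorm v

/-- The sequences `x`, `w`, `z` solve `x (k+1) = a (x k) + b (w k)`, `z k = c (x k) + d (w k)`. -/
structure IsTrajectory (a : X →L[ℂ] X) (b : U →L[ℂ] X) (c : X →L[ℂ] Z) (d : U →L[ℂ] Z)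
    (x : ℕ → X) (w : ℕ → U) (z : ℕ → Z) : Prop where
  state : ∀ k, x (k + 1) = a (x k) + b (w k)
  output : ∀ k, z k = c (x k) + d (w k)

/-- A power-stable system has a finite-energy state response. -/
theorem exists_state_energy_bound {a : X →L[ℂ] X} (ha : Tendsto (fun k : ℕ => ‖a ^ k‖) atTop (𝓝 0))
    (b : U →L[ℂ] X) :
    ∃ K : ℝ, 0 ≤ K ∧ ∀ (x : ℕ → X) (w : ℕ → U), (∀ k, x (k + 1) = a (x k) + b (w k)) →
      ∀ N, ∑ k ∈ Finset.range N, ‖x k‖ ^ 2 ≤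
        K * (‖x 0‖ ^ 2 + ∑ k ∈ Finset.range N, ‖w k‖ ^ 2) := by
  obtain ⟨n, hn⟩ := (ha.eventually_le_const (show (0 : ℝ) < 1 / 2 by norm_num)).exists
  set W : X → ℝ := fun v => ∑ k ∈ Finset.range n, ‖(a ^ k) v‖ ^ 2 with hW
  set K : ℝ := ∑ k ∈ Finset.range n, ‖a ^ k‖ ^ 2 with hK
  have hK0 : 0 ≤ K := by positivity
  have hW0 : ∀ v, 0 ≤ W v := fun v => by positivity
  have hWK : ∀ v, W v ≤ K * ‖v‖ ^ 2 := fun v => by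
    rw [hW, hK, Finset.sum_mul]
    exact Finset.sum_le_sum fun k _ => norm_apply_sq_le _ _
  have hWa : ∀ v, W (a v) ≤ W v - 3 / 4 * ‖v‖ ^ 2 := fun v => by
    have h1 : W (a v) = ∑ k ∈ Finset.range n, ‖(a ^ (k + 1)) v‖ ^ 2 := by
      simp only [hW, pow_succ, mul_apply_eq_comp]
    have h2 := Finset.sum_range_succ (fun k => ‖(a ^ k) v‖ ^ 2) n
    rw [Finset.sum_range_succ'] at h2
    have h3 : ‖(a ^ n) v‖ ^ 2 ≤ 1 / 4 * ‖v‖ ^ 2 := by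
      refine (norm_apply_sq_le _ _).trans ?_
      have : ‖a ^ n‖ ^ 2 ≤ (1 / 2) ^ 2 := by gcongr
      nlinarith [sq_nonneg ‖v‖]
    simp only [pow_zero, one_apply_eq_self] at h2
    rw [h1]
    simp only [hW]
    linarith
  set t : ℝ := (4 * (K + 1))⁻¹ with ht
  have ht0 : 0 < t := by positivity
  have htK : t * K ≤ 1 / 4 := by
    rw [ht, inv_mul_le_iff₀ (by positivity)]
    linarith
  set K' : ℝ := (1 + t⁻¹) * (K * ‖b‖ ^ 2) with hK'
  have hKnn : 0 ≤ K' := by positivity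
  have hstep : ∀ v u, W (a v + b u) ≤ W v - 1 / 2 * ‖v‖ ^ 2 + K' * ‖u‖ ^ 2 := fun v u => by
    have h1 : W (a v + b u) ≤ (1 + t) * W (a v) + (1 + t⁻¹) * W (b u) := by
      simp only [hW, Finset.mul_sum, ← Finset.sum_add_distrib, map_add]
      exact Finset.sum_le_sum fun k _ => norm_add_sq_le_young _ _ ht0
    have h2 : t * W (a v) ≤ 1 / 4 * ‖v‖ ^ 2 := by
      have : W (a v) ≤ K * ‖v‖ ^ 2 := by nlinarith [hWa v, hWK v, sq_nonneg ‖v‖]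
      calc t * W (a v) ≤ t * (K * ‖v‖ ^ 2) := by gcongr
        _ = t * K * ‖v‖ ^ 2 := by ring
        _ ≤ _ := by gcongr
    have h3 : (1 + t⁻¹) * W (b u) ≤ K' * ‖u‖ ^ 2 := by
      rw [hK', mul_assoc, mul_assoc]
      gcongr
      exact (hWK _).trans (by gcongr; exact norm_apply_sq_le b u)
    linarith [hWa v]
  refine ⟨2 * (K + K'), by positivity, fun x w hx N => ?_⟩
  have hsum : W (x N) + 1 / 2 * ∑ k ∈ Finset.range N, ‖x k‖ ^ 2 ≤
      W (x 0) + K' * ∑ k ∈ Finset.range N, ‖w k‖ ^ 2 := by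
    induction N with
    | zero => simp
    | succ N ih =>
      rw [Finset.sum_range_succ, Finset.sum_range_succ, hx]
      linarith [hstep (x N) (w N)]
  have hw : 0 ≤ ∑ k ∈ Finset.range N, ‖w k‖ ^ 2 := by positivity
  nlinarith [hW0 (x N), hWK (x 0), mul_nonneg hK0 hw, mul_nonneg hKnn (sq_nonneg ‖x 0‖)]

/-- A power-stable system has a finite-energy output response. -/
theorem exists_output_energy_bound {a : X →L[ℂ] X}
    (ha : Tendsto (fun k : ℕ => ‖a ^ k‖) atTop (𝓝 0))
    (b : U →L[ℂ] X) (c : X →L[ℂ] Z) (d : U →L[ℂ] Z) :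
    ∃ K : ℝ, 0 ≤ K ∧ ∀ (x : ℕ → X) (w : ℕ → U) (z : ℕ → Z), IsTrajectory a b c d x w z →
      ∀ N, ∑ k ∈ Finset.range N, ‖z k‖ ^ 2 ≤
        K * (‖x 0‖ ^ 2 + ∑ k ∈ Finset.range N, ‖w k‖ ^ 2) := by
  obtain ⟨K, hK, h⟩ := exists_state_energy_bound ha b
  refine ⟨2 * (‖c‖ ^ 2 * K + ‖d‖ ^ 2), by positivity, fun x w z hz N => ?_⟩
  have h1 : ∑ k ∈ Finset.range N, ‖z k‖ ^ 2 ≤ 2 * ‖c‖ ^ 2 * ∑ k ∈ Finset.range N, ‖x k‖ ^ 2 +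
      2 * ‖d‖ ^ 2 * ∑ k ∈ Finset.range N, ‖w k‖ ^ 2 := by
    rw [Finset.mul_sum, Finset.mul_sum, ← Finset.sum_add_distrib]
    refine Finset.sum_le_sum fun k _ => ?_
    rw [hz.output]
    have := norm_add_sq_le_young (c (x k)) (d (w k)) one_pos
    have := norm_apply_sq_le c (x k)
    have := norm_apply_sq_le d (w k)
    linarith
  have h2 := mul_le_mul_of_nonneg_left (h x w hz.state N) (by positivity : 0 ≤ 2 * ‖c‖ ^ 2)
  nlinarith [mul_nonneg (sq_nonneg ‖d‖) (sq_nonneg ‖x 0‖)]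

/-- The state sequence driven by `w` from the initial state `x₀`. -/
def stateSeq (a : X →L[ℂ] X) (b : U →L[ℂ] X) (x₀ : X) (w : ℕ → U) : ℕ → X
  | 0 => x₀
  | k + 1 => a (stateSeq a b x₀ w k) + b (w k)

/-- The output sequence driven by `w` from the initial state `x₀`. -/
def outputSeq (a : X →L[ℂ] X) (b : U →L[ℂ] X) (c : X →L[ℂ] Z) (d : U →L[ℂ] Z) (x₀ : X)
    (w : ℕ → U) (k : ℕ) : Z :=
  c (stateSeq a b x₀ w k) + d (w k)

theorem isTrajectory_stateSeq (a : X →L[ℂ] X) (b : U →L[ℂ] X) (c : X →L[ℂ] Z) (d : U →L[ℂ] Z)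
    (x₀ : X) (w : ℕ → U) :
    IsTrajectory a b c d (stateSeq a b x₀ w) w (outputSeq a b c d x₀ w) :=
  ⟨fun _ => rfl, fun _ => rfl⟩

theorem stateSeq_add (a : X →L[ℂ] X) (b : U →L[ℂ] X) (x y : X) (v w : ℕ → U) (k : ℕ) :
    stateSeq a b (x + y) (v + w) k = stateSeq a b x v k + stateSeq a b y w k := by
  induction k with
  | zero => rfl
  | succ k ih => simp only [stateSeq, ih, Pi.add_apply, map_add]; abel

theorem stateSeq_smul (a : X →L[ℂ] X) (b : U →L[ℂ] X) (r : ℂ) (x : X) (w : ℕ → U) (k : ℕ) :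
    stateSeq a b (r • x) (r • w) k = r • stateSeq a b x w k := by
  induction k with
  | zero => rfl
  | succ k ih => simp only [stateSeq, ih, Pi.smul_apply, map_smul, smul_add]

theorem stateSeq_succ (a : X →L[ℂ] X) (b : U →L[ℂ] X) (x : X) (w : ℕ → U) (k : ℕ) :
    stateSeq a b x w (k + 1) = stateSeq a b (a x + b (w 0)) (fun j => w (j + 1)) k := by
  induction k with
  | zero => rfl
  | succ k ih => rw [stateSeq, ih]; rfl

theorem outputSeq_succ (a : X →L[ℂ] X) (b : U →L[ℂ] X) (c : X →L[ℂ] Z) (d : U →L[ℂ] Z) (x : X)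
    (w : ℕ → U) (k : ℕ) : outputSeq a b c d x w (k + 1) =
      outputSeq a b c d (a x + b (w 0)) (fun j => w (j + 1)) k := by
  rw [outputSeq, stateSeq_succ]; rfl

theorem lp_two_hasSum_norm_sq {E : Type*} [NormedAddCommGroup E] (f : lp (fun _ : ℕ => E) 2) :
    HasSum (fun k => ‖f k‖ ^ 2) (‖f‖ ^ 2) := by
  simpa using lp.hasSum_norm (p := 2) (by norm_num) f

theorem memℓp_two_iff {E : Type*} [NormedAddCommGroup E] {f : ℕ → E} :
    Memℓp f 2 ↔ Summable fun k => ‖f k‖ ^ 2 := by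
  simp [memℓp_gen_iff (p := 2) (E := fun _ : ℕ => E) (by norm_num)]

/-- For a power-stable system, the map from initial state and input to output is bounded
`X × ℓ² → ℓ²`. -/
theorem exists_responseCLM {a : X →L[ℂ] X} (ha : Tendsto (fun k : ℕ => ‖a ^ k‖) atTop (𝓝 0))
    (b : U →L[ℂ] X) (c : X →L[ℂ] Z) (d : U →L[ℂ] Z) :
    ∃ L : (X × lp (fun _ : ℕ => U) 2) →L[ℂ] lp (fun _ : ℕ => Z) 2,
      ∀ x w k, L (x, w) k = outputSeq a b c d x w k := by
  obtain ⟨K, hK, h⟩ := exists_output_energy_bound ha b c d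
  have hbound : ∀ (x : X) (w : lp (fun _ : ℕ => U) 2) N,
      ∑ k ∈ Finset.range N, ‖outputSeq a b c d x w k‖ ^ 2 ≤ K * (‖x‖ ^ 2 + ‖w‖ ^ 2) := by
    intro x w N
    refine (h _ _ _ (isTrajectory_stateSeq a b c d x w) N).trans ?_
    gcongr
    · exact le_rfl
    · exact sum_le_hasSum _ (fun _ _ => by positivity) (lp_two_hasSum_norm_sq w)
  have hsum : ∀ (x : X) (w : lp (fun _ : ℕ => U) 2),
      Summable fun k => ‖outputSeq a b c d x w k‖ ^ 2 := fun x w =>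
    summable_of_sum_range_le (fun _ => by positivity) (hbound x w)
  let L₀ : (X × lp (fun _ : ℕ => U) 2) →ₗ[ℂ] lp (fun _ : ℕ => Z) 2 :=
    { toFun := fun q => ⟨fun k => outputSeq a b c d q.1 q.2 k, memℓp_two_iff.2 (hsum q.1 q.2)⟩
      map_add' := fun q q' => by
        ext k
        simp only [outputSeq, Prod.fst_add, Prod.snd_add, lp.coeFn_add, Pi.add_apply,
          stateSeq_add, map_add]
        abel
      map_smul' := fun r q => by
        ext k
        simp only [outputSeq, Prod.smul_fst, Prod.smul_snd, lp.coeFn_smul, Pi.smul_apply,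
          stateSeq_smul, map_smul, RingHom.id_apply, smul_add] }
  refine ⟨L₀.mkContinuous (√(2 * K)) fun q => ?_, fun x w k => rfl⟩
  refine le_of_sq_le_sq ?_ (by positivity)
  rw [mul_pow, Real.sq_sqrt (by positivity)]
  have h1 : ‖L₀ q‖ ^ 2 ≤ K * (‖q.1‖ ^ 2 + ‖q.2‖ ^ 2) :=
    (lp_two_hasSum_norm_sq (L₀ q)).tsum_eq ▸
      Real.tsum_le_of_sum_range_le (fun _ => by positivity) (hbound q.1 q.2)
  have h2 : ‖q.1‖ ^ 2 ≤ ‖q‖ ^ 2 := by gcongr; exact norm_fst_le q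
  have h3 : ‖q.2‖ ^ 2 ≤ ‖q‖ ^ 2 := by gcongr; exact norm_snd_le q
  nlinarith

/-- If `‖T‖ < 1`, the concave problem of maximising `‖O x + T w‖² - ‖w‖²` over `w` is solved by a
bounded linear feedback `w = G x`. -/
theorem exists_optimal_feedback {E F : Type*} [NormedAddCommGroup E] [InnerProductSpace ℂ E]
    [CompleteSpace E] [NormedAddCommGroup F] [InnerProductSpace ℂ F] [CompleteSpace F]
    (O : X →L[ℂ] F) (T : E →L[ℂ] F) (hT : ‖T‖ < 1) :
    ∃ G : X →L[ℂ] E, ∀ x w, ‖O x + T w‖ ^ 2 - ‖w‖ ^ 2 ≤ ‖O x + T (G x)‖ ^ 2 - ‖G x‖ ^ 2 := by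
  have hnorm : ‖T.adjoint ∘L T‖ < 1 := by
    rw [ContinuousLinearMap.norm_adjoint_comp_self]
    nlinarith [norm_nonneg T]
  obtain ⟨u, hu⟩ := isUnit_one_sub_of_norm_lt_one hnorm
  refine ⟨(↑u⁻¹ : E →L[ℂ] E) ∘L T.adjoint ∘L O, fun x w => ?_⟩
  set g := ((↑u⁻¹ : E →L[ℂ] E) ∘L T.adjoint ∘L O) x with hg
  have hgx : g - T.adjoint (T g) = T.adjoint (O x) := by
    have h1 : (u : E →L[ℂ] E) g = T.adjoint (O x) := by
      rw [hg]
      change ((u : E →L[ℂ] E) * (↑u⁻¹ : E →L[ℂ] E)) _ = _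
      simp
    rw [← h1, hu]
    rfl
  have hopt : T.adjoint (O x + T g) = g := by rw [map_add, ← hgx]; abel
  obtain ⟨v, rfl⟩ : ∃ v, w = g + v := ⟨w - g, by abel⟩
  have h1 : ‖O x + T (g + v)‖ ^ 2 = ‖O x + T g‖ ^ 2 + 2 * RCLike.re ⟪g, v⟫_ℂ + ‖T v‖ ^ 2 := by
    rw [map_add, ← add_assoc, norm_add_sq (𝕜 := ℂ), ← ContinuousLinearMap.adjoint_inner_left, hopt]
  have h2 := norm_add_sq (𝕜 := ℂ) g v
  have h3 : ‖T v‖ ^ 2 ≤ ‖v‖ ^ 2 :=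
    (norm_apply_sq_le T v).trans (mul_le_of_le_one_left (by positivity) (by
      nlinarith [norm_nonneg T]))
  linarith

/-- The sequence with head `u` and tail `w`, as an element of `ℓ²`. -/
theorem exists_lp_cons {E : Type*} [NormedAddCommGroup E] (u : E) (w : lp (fun _ : ℕ => E) 2) :
    ∃ w' : lp (fun _ : ℕ => E) 2, w' 0 = u ∧ ∀ k, w' (k + 1) = w k := by
  refine ⟨⟨fun k => Nat.casesOn k u w, memℓp_two_iff.2 ?_⟩, rfl, fun _ => rfl⟩
  exact (summable_nat_add_iff 1).1 (lp_two_hasSum_norm_sq w).summable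

theorem lp_two_norm_sq_eq_head_add_tail {E : Type*} [NormedAddCommGroup E]
    {f g : lp (fun _ : ℕ => E) 2} (h : ∀ k, f (k + 1) = g k) :
    ‖f‖ ^ 2 = ‖f 0‖ ^ 2 + ‖g‖ ^ 2 := by
  have hf := lp_two_hasSum_norm_sq f
  have hg := lp_two_hasSum_norm_sq g
  rw [← hf.tsum_eq, hf.summable.tsum_eq_zero_add, ← hg.tsum_eq]
  simp only [h]

theorem exists_selfAdjoint_re_inner_eq_norm_sq_sub [CompleteSpace X] {E F : Type*}
    [NormedAddCommGroup E] [InnerProductSpace ℂ E] [CompleteSpace E]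
    [NormedAddCommGroup F] [InnerProductSpace ℂ F] [CompleteSpace F] (M : X →L[ℂ] F) (G : X →L[ℂ] E) :
    ∃ P : X →L[ℂ] X, IsSelfAdjoint P ∧ ∀ y, RCLike.re ⟪y, P y⟫_ℂ = ‖M y‖ ^ 2 - ‖G y‖ ^ 2 := by
  refine ⟨M.adjoint ∘L M - G.adjoint ∘L G, ?_, fun y => ?_⟩
  · exact (ContinuousLinearMap.isPositive_adjoint_comp_self M).isSelfAdjoint.sub
      (ContinuousLinearMap.isPositive_adjoint_comp_self G).isSelfAdjoint
  · simp only [_root_.sub_apply, ContinuousLinearMap.comp_apply, inner_sub_right,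
      ContinuousLinearMap.adjoint_inner_right, map_sub, inner_self_eq_norm_sq]

/-- Strict bounded real lemma, sufficiency. -/
theorem exists_gain_lt_one_of_strict_storage {a : X →L[ℂ] X}
    (ha : Tendsto (fun k : ℕ => ‖a ^ k‖) atTop (𝓝 0))
    (b : U →L[ℂ] X) (c : X →L[ℂ] Z) (d : U →L[ℂ] Z) (P : X →L[ℂ] X) {ε : ℝ} (hε : 0 < ε)
    (h : ∀ x u, RCLike.re ⟪a x + b u, P (a x + b u)⟫_ℂ + ‖c x + d u‖ ^ 2 +
      ε * (‖x‖ ^ 2 + ‖u‖ ^ 2) ≤ RCLike.re ⟪x, P x⟫_ℂ + ‖u‖ ^ 2) :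
    ∃ ρ : ℝ, 0 ≤ ρ ∧ ρ < 1 ∧ ∀ x w z, IsTrajectory a b c d x w z → x 0 = 0 →
      (Summable fun k => ‖w k‖ ^ 2) → ∑' k, ‖z k‖ ^ 2 ≤ ρ * ∑' k, ‖w k‖ ^ 2 := by
  set V : X → ℝ := fun x => RCLike.re ⟪x, P x⟫_ℂ with hV
  have hdecr : ∀ x N, V ((a ^ N) x) ≤ V x := by
    intro x N
    induction N with
    | zero => simp
    | succ N ih =>
      refine le_trans ?_ ih
      have h1 := h ((a ^ N) x) 0
      rw [pow_succ', mul_apply_eq_comp]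
      simp only [map_zero, add_zero, norm_zero] at h1
      simp only [hV]
      have h2 : 0 ≤ ε * (‖(a ^ N) x‖ ^ 2 + 0 ^ 2) := by positivity
      linarith [sq_nonneg ‖c ((a ^ N) x)‖]
  have hV0 : ∀ x, 0 ≤ V x := by
    intro x
    have hlim : Tendsto (fun N => (a ^ N) x) atTop (𝓝 0) := by
      rw [tendsto_zero_iff_norm_tendsto_zero]
      refine squeeze_zero (fun _ => norm_nonneg _) (fun N => (a ^ N).le_opNorm x) ?_
      simpa using ha.mul_const ‖x‖
    have hcont : Continuous V := by fun_prop
    have := (hcont.tendsto 0).comp hlim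
    simp only [hV, map_zero, inner_zero_right] at this
    exact le_of_tendsto this (Eventually.of_forall fun N => hdecr x N)
  refine ⟨max (1 - ε) 0, le_max_right _ _, by simp [hε], fun x w z hz hx0 hw => ?_⟩
  refine Real.tsum_le_of_sum_range_le (fun _ => by positivity) fun N => ?_
  have hsum : V (x N) + ∑ k ∈ Finset.range N, ‖z k‖ ^ 2 ≤
      (1 - ε) * ∑ k ∈ Finset.range N, ‖w k‖ ^ 2 := by
    induction N with
    | zero => simp [hV, hx0]
    | succ N ih =>
      rw [Finset.sum_range_succ, Finset.sum_range_succ, hz.state, hz.output]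
      have := h (x N) (w N)
      have := mul_nonneg hε.le (sq_nonneg ‖x N‖)
      simp only [hV] at ih ⊢
      linarith
  calc ∑ k ∈ Finset.range N, ‖z k‖ ^ 2 ≤ (1 - ε) * ∑ k ∈ Finset.range N, ‖w k‖ ^ 2 := by
        linarith [hV0 (x N)]
    _ ≤ max (1 - ε) 0 * ∑' k, ‖w k‖ ^ 2 := by
        gcongr
        · exact le_max_left _ _
        · exact hw.sum_le_tsum _ fun _ _ => by positivity

variable [CompleteSpace X] [CompleteSpace U] [CompleteSpace Z]

/-- Nonstrict bounded real lemma: a power-stable system with gain `< 1` is dissipative with a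
quadratic storage function. -/
theorem exists_storage_of_gain_lt_one {a : X →L[ℂ] X}
    (ha : Tendsto (fun k : ℕ => ‖a ^ k‖) atTop (𝓝 0))
    (b : U →L[ℂ] X) (c : X →L[ℂ] Z) (d : U →L[ℂ] Z) {ρ : ℝ} (hρ : ρ < 1)
    (hgain : ∀ x w z, IsTrajectory a b c d x w z → x 0 = 0 → (Summable fun k => ‖w k‖ ^ 2) →
      ∑' k, ‖z k‖ ^ 2 ≤ ρ * ∑' k, ‖w k‖ ^ 2) :
    ∃ P : X →L[ℂ] X, IsSelfAdjoint P ∧ ∀ x u,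
      RCLike.re ⟪a x + b u, P (a x + b u)⟫_ℂ + ‖c x + d u‖ ^ 2 ≤
        RCLike.re ⟪x, P x⟫_ℂ + ‖u‖ ^ 2 := by
  obtain ⟨L, hL⟩ := exists_responseCLM ha b c d
  set O := L ∘L ContinuousLinearMap.inl ℂ X (lp (fun _ : ℕ => U) 2) with hO
  set T := L ∘L ContinuousLinearMap.inr ℂ X (lp (fun _ : ℕ => U) 2) with hT
  have hOT : ∀ x w, L (x, w) = O x + T w := fun x w => by
    simp [hO, hT, ← map_add]
  have hTnorm : ‖T‖ < 1 := by
    refine (T.opNorm_le_bound (Real.sqrt_nonneg (max ρ 0)) fun w => ?_).trans_lt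
      ((Real.sqrt_lt' one_pos).2 (by simp [hρ]))
    refine le_of_sq_le_sq ?_ (by positivity)
    rw [mul_pow, Real.sq_sqrt (by positivity), ← (lp_two_hasSum_norm_sq (T w)).tsum_eq,
      ← (lp_two_hasSum_norm_sq w).tsum_eq]
    have h1 := hgain _ _ _ (isTrajectory_stateSeq a b c d 0 w) rfl (lp_two_hasSum_norm_sq w).summable
    have h2 : ∀ k, T w k = outputSeq a b c d 0 w k := fun k => hL 0 w k
    simp only [h2]
    refine h1.trans ?_
    gcongr
    exact le_max_left _ _
  obtain ⟨G, hG⟩ := exists_optimal_feedback O T hTnorm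
  set M := O + T ∘L G with hM
  obtain ⟨P, hPsa, hP⟩ := exists_selfAdjoint_re_inner_eq_norm_sq_sub M G
  have hM' : ∀ y, ‖M y‖ ^ 2 = ‖L (y, G y)‖ ^ 2 := fun y => by rw [hOT]; rfl
  refine ⟨P, hPsa, fun x u => ?_⟩
  rw [hP, hP, hM', hM']
  obtain ⟨w, hw0, hw⟩ := exists_lp_cons u (G (a x + b u))
  have h1 := hG x w
  rw [← hOT, ← hOT, lp_two_norm_sq_eq_head_add_tail hw, hw0,
    lp_two_norm_sq_eq_head_add_tail (f := L (x, w)) (g := L (a x + b u, G (a x + b u))),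
    hL] at h1
  · have h2 : outputSeq a b c d x w 0 = c x + d u := by rw [← hw0]; rfl
    rw [h2] at h1
    linarith
  · intro k
    rw [hL, hL, outputSeq_succ, hw0]
    simp only [hw]

/-- Strict bounded real lemma, necessity. -/
theorem exists_strict_storage_of_gain_lt_one {a : X →L[ℂ] X}
    (ha : Tendsto (fun k : ℕ => ‖a ^ k‖) atTop (𝓝 0))
    (b : U →L[ℂ] X) (c : X →L[ℂ] Z) (d : U →L[ℂ] Z) {ρ : ℝ} (hρ : ρ < 1)
    (hgain : ∀ x w z, IsTrajectory a b c d x w z → x 0 = 0 → (Summable fun k => ‖w k‖ ^ 2) →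
      ∑' k, ‖z k‖ ^ 2 ≤ ρ * ∑' k, ‖w k‖ ^ 2) :
    ∃ P : X →L[ℂ] X, IsSelfAdjoint P ∧ ∃ ε > 0, ∀ x u,
      RCLike.re ⟪a x + b u, P (a x + b u)⟫_ℂ + ‖c x + d u‖ ^ 2 + ε * (‖x‖ ^ 2 + ‖u‖ ^ 2) ≤
        RCLike.re ⟪x, P x⟫_ℂ + ‖u‖ ^ 2 := by
  obtain ⟨K, hK, hstate⟩ := exists_state_energy_bound ha b
  obtain ⟨K', hK', hout⟩ := exists_output_energy_bound ha b c d
  set ε : ℝ := (1 - ρ) / (2 * (K + 1)) with hε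
  have hε0 : 0 < ε := div_pos (by linarith) (by positivity)
  have hεK : ε * (K + 1) = (1 - ρ) / 2 := by rw [hε]; field_simp
  set s : ℂ := ((√ε : ℝ) : ℂ) with hs
  have hs2 : ‖s‖ ^ 2 = ε := by
    rw [hs, Complex.norm_real, Real.norm_eq_abs, sq_abs, Real.sq_sqrt hε0.le]
  -- augment the output by `√ε • (x, u)`
  let ι₁ := (WithLp.prodContinuousLinearEquiv 2 ℂ X U).symm.toContinuousLinearMap
  let ι₂ := (WithLp.prodContinuousLinearEquiv 2 ℂ Z (WithLp 2 (X × U))).symm.toContinuousLinearMap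
  let c' : X →L[ℂ] WithLp 2 (Z × WithLp 2 (X × U)) :=
    ι₂ ∘L c.prod (ι₁ ∘L (s • ContinuousLinearMap.id ℂ X).prod 0)
  let d' : U →L[ℂ] WithLp 2 (Z × WithLp 2 (X × U)) :=
    ι₂ ∘L d.prod (ι₁ ∘L (0 : U →L[ℂ] X).prod (s • ContinuousLinearMap.id ℂ U))
  have hnorm : ∀ x u, ‖c' x + d' u‖ ^ 2 = ‖c x + d u‖ ^ 2 + ε * (‖x‖ ^ 2 + ‖u‖ ^ 2) := by
    intro x u
    rw [WithLp.prod_norm_sq_eq_of_L2, WithLp.prod_norm_sq_eq_of_L2]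
    simp [c', d', ι₁, ι₂, norm_smul, mul_pow, hs2, mul_add]
  have hgain' : ∀ x w z, IsTrajectory a b c' d' x w z → x 0 = 0 →
      (Summable fun k => ‖w k‖ ^ 2) → ∑' k, ‖z k‖ ^ 2 ≤ (ρ + ε * (K + 1)) * ∑' k, ‖w k‖ ^ 2 := by
    intro x w z hz hx0 hw
    have hpart : ∀ N, ∑ k ∈ Finset.range N, ‖w k‖ ^ 2 ≤ ∑' k, ‖w k‖ ^ 2 := fun N =>
      hw.sum_le_tsum _ fun _ _ => by positivity
    have hx : ∀ N, ∑ k ∈ Finset.range N, ‖x k‖ ^ 2 ≤ K * ∑' k, ‖w k‖ ^ 2 := fun N => by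
      refine (hstate x w hz.state N).trans ?_
      rw [hx0, norm_zero]
      gcongr
      linarith [hpart N]
    have hz₀ : IsTrajectory a b c d x w fun k => c (x k) + d (w k) := ⟨hz.state, fun _ => rfl⟩
    have hy : Summable fun k => ‖c (x k) + d (w k)‖ ^ 2 := by
      refine summable_of_sum_range_le (c := K' * ∑' k, ‖w k‖ ^ 2) (fun _ => by positivity) fun N => ?_
      refine (hout _ _ _ hz₀ N).trans ?_
      rw [hx0, norm_zero]
      gcongr
      linarith [hpart N]
    have hxs : Summable fun k => ‖x k‖ ^ 2 := summable_of_sum_range_le (fun _ => by positivity) hx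
    have hxt := Real.tsum_le_of_sum_range_le (fun _ => by positivity) hx
    have hyt := hgain _ _ _ hz₀ hx0 hw
    simp only [hz.output, hnorm]
    rw [hy.tsum_add ((hxs.add hw).mul_left ε), tsum_mul_left, hxs.tsum_add hw]
    have := mul_le_mul_of_nonneg_left hxt hε0.le
    linarith
  obtain ⟨P, hP, h⟩ := exists_storage_of_gain_lt_one ha b c' d' (by linarith) hgain'
  refine ⟨P, hP, ε, hε0, fun x u => ?_⟩
  have := h x u
  rw [hnorm] at this
  linarith

end Hilbert

section Matrix

/-- The continuous linear map between Euclidean spaces given by a matrix. -/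
noncomputable def Matrix.euclideanMap {ι κ : Type*} [Fintype ι] [Fintype κ] [DecidableEq κ]
    (M : Matrix ι κ ℂ) : EuclideanSpace ℂ κ →L[ℂ] EuclideanSpace ℂ ι :=
  LinearMap.toContinuousLinearMap (Matrix.toEuclideanLin M)

theorem Matrix.euclideanMap_toLp {ι κ : Type*} [Fintype ι] [Fintype κ] [DecidableEq κ]
    (M : Matrix ι κ ℂ) (v : κ → ℂ) :
    M.euclideanMap (WithLp.toLp 2 v) = WithLp.toLp 2 (M *ᵥ v) := rfl

theorem Matrix.toEuclideanCLM_eq_euclideanMap {ι : Type*} [Fintype ι] [DecidableEq ι]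
    (M : Matrix ι ι ℂ) : Matrix.toEuclideanCLM (n := ι) (𝕜 := ℂ) M = M.euclideanMap := rfl

theorem Matrix.tendsto_norm_euclideanMap_pow {ι : Type*} [Fintype ι] [DecidableEq ι]
    {A : Matrix ι ι ℂ} (hA : spectralRadius ℂ A < 1) :
    Tendsto (fun k : ℕ => ‖A.euclideanMap ^ k‖) atTop (𝓝 0) := by
  refine tendsto_norm_pow_of_spectralRadius_lt_one ?_
  rw [← Matrix.toEuclideanCLM_eq_euclideanMap]
  have : spectrum ℂ (Matrix.toEuclideanCLM (n := ι) (𝕜 := ℂ) A) = spectrum ℂ A :=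
    AlgEquiv.spectrum_eq (Matrix.toEuclideanCLM (n := ι) (𝕜 := ℂ)) A
  rwa [spectralRadius, this]

theorem Matrix.star_dotProduct_conjTranspose_mulVec {ι κ : Type*} [Fintype ι] [Fintype κ]
    (A : Matrix ι κ ℂ) (x : κ → ℂ) (y : ι → ℂ) :
    star x ⬝ᵥ (Aᴴ *ᵥ y) = star (A *ᵥ x) ⬝ᵥ y := by
  rw [dotProduct_mulVec, star_mulVec]

theorem EuclideanSpace.re_inner_toLp {ι : Type*} [Fintype ι] (x y : ι → ℂ) :
    RCLike.re ⟪WithLp.toLp 2 x, WithLp.toLp 2 y⟫_ℂ = (star x ⬝ᵥ y).re := by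
  rw [EuclideanSpace.inner_eq_star_dotProduct, dotProduct_comm]
  rfl

theorem EuclideanSpace.norm_toLp_sq {ι : Type*} [Fintype ι] (x : ι → ℂ) :
    ‖WithLp.toLp 2 x‖ ^ 2 = (star x ⬝ᵥ x).re := by
  rw [← EuclideanSpace.re_inner_toLp, inner_self_eq_norm_sq]

/-- The quadratic form of the KYP matrix measures the dissipation of the storage function
`x ↦ x* P x`. -/
theorem kyp_quadraticForm {n m p : ℕ} (A : Matrix (Fin n) (Fin n) ℂ)
    (B : Matrix (Fin n) (Fin m) ℂ) (C : Matrix (Fin p) (Fin n) ℂ)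
    (D : Matrix (Fin p) (Fin m) ℂ) (P : Matrix (Fin n) (Fin n) ℂ) (x : Fin n → ℂ) (u : Fin m → ℂ) :
    (star (Sum.elim x u) ⬝ᵥ
      (-(fromBlocks (Aᴴ * P * A - P) (Aᴴ * P * B) (Bᴴ * P * A) (Bᴴ * P * B) +
            fromBlocks (Cᴴ * C) (Cᴴ * D) (Dᴴ * C)
              (Dᴴ * D - (1 : Matrix (Fin m) (Fin m) ℂ)))) *ᵥ Sum.elim x u).re =
      RCLike.re ⟪WithLp.toLp 2 x, P.euclideanMap (WithLp.toLp 2 x)⟫_ℂ + ‖WithLp.toLp 2 u‖ ^ 2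
      - RCLike.re ⟪A.euclideanMap (WithLp.toLp 2 x) + B.euclideanMap (WithLp.toLp 2 u),
        P.euclideanMap (A.euclideanMap (WithLp.toLp 2 x) + B.euclideanMap (WithLp.toLp 2 u))⟫_ℂ
      - ‖C.euclideanMap (WithLp.toLp 2 x) + D.euclideanMap (WithLp.toLp 2 u)‖ ^ 2 := by
  have hstar : star (Sum.elim x u) = Sum.elim (star x) (star u) := by
    ext i; cases i <;> rfl
  simp only [Matrix.euclideanMap_toLp, ← WithLp.toLp_add, EuclideanSpace.re_inner_toLp,
    EuclideanSpace.norm_toLp_sq]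
  rw [← Complex.add_re, ← Complex.sub_re, ← Complex.sub_re]
  congr 1
  rw [fromBlocks_add, neg_mulVec, fromBlocks_mulVec, hstar, dotProduct_neg,
    sumElim_dotProduct_sumElim]
  simp only [Sum.elim_comp_inl, Sum.elim_comp_inr, add_mulVec, sub_mulVec, ← mulVec_mulVec,
    one_mulVec, dotProduct_add, dotProduct_sub, Matrix.star_dotProduct_conjTranspose_mulVec,
    mulVec_add, star_add, add_dotProduct]
  ring

theorem kyp_isHermitian {n m p : ℕ} (A : Matrix (Fin n) (Fin n) ℂ)
    (B : Matrix (Fin n) (Fin m) ℂ) (C : Matrix (Fin p) (Fin n) ℂ)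
    (D : Matrix (Fin p) (Fin m) ℂ) {P : Matrix (Fin n) (Fin n) ℂ} (hP : P.IsHermitian) :
    (-(fromBlocks (Aᴴ * P * A - P) (Aᴴ * P * B) (Bᴴ * P * A) (Bᴴ * P * B) +
            fromBlocks (Cᴴ * C) (Cᴴ * D) (Dᴴ * C)
              (Dᴴ * D - (1 : Matrix (Fin m) (Fin m) ℂ)))).IsHermitian := by
  rw [Matrix.IsHermitian]
  simp only [conjTranspose_neg, conjTranspose_add, fromBlocks_conjTranspose, conjTranspose_sub,
    conjTranspose_mul, conjTranspose_conjTranspose, conjTranspose_one, hP.eq, Matrix.mul_assoc]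

/-- A positive definite matrix is uniformly coercive. -/
theorem Matrix.PosDef.exists_coercive {ι : Type*} [Fintype ι] {M : Matrix ι ι ℂ} (hM : M.PosDef) :
    ∃ ε > 0, ∀ v : ι → ℂ, ε * ‖WithLp.toLp 2 v‖ ^ 2 ≤ (star v ⬝ᵥ M *ᵥ v).re := by
  set f : EuclideanSpace ℂ ι → ℝ := fun v => (star v.ofLp ⬝ᵥ M *ᵥ v.ofLp).re with hf
  have hpos : ∀ v : EuclideanSpace ℂ ι, v ≠ 0 → 0 < f v := fun v hv =>
    (Complex.pos_iff.1 (hM.dotProduct_mulVec_pos (by simpa using hv))).1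
  have hcont : Continuous f := by
    simp only [hf]
    fun_prop
  obtain ⟨ε, hε, h⟩ : ∃ ε > 0, ∀ v ∈ Metric.sphere (0 : EuclideanSpace ℂ ι) 1, ε ≤ f v := by
    rcases (Metric.sphere (0 : EuclideanSpace ℂ ι) 1).eq_empty_or_nonempty with he | hne
    · exact ⟨1, one_pos, by simp [he]⟩
    · obtain ⟨v, hv, hmin⟩ := (isCompact_sphere _ _).exists_isMinOn hne hcont.continuousOn
      exact ⟨f v, hpos v (ne_zero_of_mem_unit_sphere ⟨v, hv⟩), fun y hy => hmin hy⟩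
  refine ⟨ε, hε, fun v => ?_⟩
  by_cases hv : WithLp.toLp 2 v = 0
  · have : v = 0 := by simpa using hv
    simp [this]
  · have hn : 0 < ‖WithLp.toLp 2 v‖ := norm_pos_iff.2 hv
    have h1 := h (((‖WithLp.toLp 2 v‖⁻¹ : ℝ) : ℂ) • WithLp.toLp 2 v) (by
      rw [mem_sphere_zero_iff_norm, norm_smul, Complex.norm_real, norm_inv, norm_norm,
        inv_mul_cancel₀ hn.ne'])
    have h2 : f (((‖WithLp.toLp 2 v‖⁻¹ : ℝ) : ℂ) • WithLp.toLp 2 v) =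
        (‖WithLp.toLp 2 v‖ ^ 2)⁻¹ * (star v ⬝ᵥ M *ᵥ v).re := by
      simp only [hf, WithLp.ofLp_smul, star_smul, mulVec_smul, smul_dotProduct, dotProduct_smul,
        smul_eq_mul, ← mul_assoc, Complex.star_def, Complex.conj_ofReal, ← Complex.ofReal_mul,
        Complex.re_ofReal_mul]
      rw [sq, mul_inv]
    rw [h2, inv_mul_eq_div, le_div_iff₀ (by positivity)] at h1
    exact h1

theorem EuclideanSpace.norm_toLp_sumElim_sq {ι κ : Type*} [Fintype ι] [Fintype κ] (x : ι → ℂ)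
    (u : κ → ℂ) : ‖WithLp.toLp 2 (Sum.elim x u)‖ ^ 2 =
      ‖WithLp.toLp 2 x‖ ^ 2 + ‖WithLp.toLp 2 u‖ ^ 2 := by
  simp [EuclideanSpace.norm_sq_eq, Fintype.sum_sum_type]

/-- The KYP inequality is a strict dissipation inequality with a uniform margin. -/
theorem kyp_posDef_iff {n m p : ℕ} (A : Matrix (Fin n) (Fin n) ℂ)
    (B : Matrix (Fin n) (Fin m) ℂ) (C : Matrix (Fin p) (Fin n) ℂ)
    (D : Matrix (Fin p) (Fin m) ℂ) {P : Matrix (Fin n) (Fin n) ℂ} (hP : P.IsHermitian) :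
    (-(fromBlocks (Aᴴ * P * A - P) (Aᴴ * P * B) (Bᴴ * P * A) (Bᴴ * P * B) +
            fromBlocks (Cᴴ * C) (Cᴴ * D) (Dᴴ * C)
              (Dᴴ * D - (1 : Matrix (Fin m) (Fin m) ℂ)))).PosDef ↔
    ∃ ε > 0, ∀ x u,
      RCLike.re ⟪A.euclideanMap x + B.euclideanMap u,
        P.euclideanMap (A.euclideanMap x + B.euclideanMap u)⟫_ℂ +
        ‖C.euclideanMap x + D.euclideanMap u‖ ^ 2 + ε * (‖x‖ ^ 2 + ‖u‖ ^ 2) ≤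
        RCLike.re ⟪x, P.euclideanMap x⟫_ℂ + ‖u‖ ^ 2 := by
  have hH := kyp_isHermitian A B C D hP
  constructor
  · intro h
    obtain ⟨ε, hε, hc⟩ := h.exists_coercive
    refine ⟨ε, hε, fun x u => ?_⟩
    have h1 := hc (Sum.elim x.ofLp u.ofLp)
    rw [kyp_quadraticForm, EuclideanSpace.norm_toLp_sumElim_sq] at h1
    simp only [WithLp.toLp_ofLp] at h1
    linarith
  · rintro ⟨ε, hε, h⟩
    refine .of_dotProduct_mulVec_pos hH fun v hv => Complex.pos_iff.2 ⟨?_, ?_⟩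
    · have hv2 : 0 < ‖WithLp.toLp 2 v‖ ^ 2 := by
        have : WithLp.toLp 2 v ≠ 0 := by simpa using hv
        positivity
      rw [← Sum.elim_comp_inl_inr v, EuclideanSpace.norm_toLp_sumElim_sq] at hv2
      rw [← Sum.elim_comp_inl_inr v, kyp_quadraticForm]
      have := h (WithLp.toLp 2 (v ∘ Sum.inl)) (WithLp.toLp 2 (v ∘ Sum.inr))
      nlinarith
    · exact (hH.im_star_dotProduct_mulVec_self v).symm

/-- `‖z‖² ≤ μ∞ ‖w‖²` for all finite-energy disturbances of a Schur stable system. -/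
theorem gain_le_muInfty {n m p : ℕ} {A : Matrix (Fin n) (Fin n) ℂ} (hA : spectralRadius ℂ A < 1)
    (B : Matrix (Fin n) (Fin m) ℂ) (C : Matrix (Fin p) (Fin n) ℂ) (D : Matrix (Fin p) (Fin m) ℂ)
    {x : ℕ → EuclideanSpace ℂ (Fin n)} {w : ℕ → EuclideanSpace ℂ (Fin m)}
    {z : ℕ → EuclideanSpace ℂ (Fin p)}
    (h : IsTrajectory A.euclideanMap B.euclideanMap C.euclideanMap D.euclideanMap x w z)
    (hx0 : x 0 = 0) (hw : Summable fun k => ‖w k‖ ^ 2) :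
    ∑' k, ‖z k‖ ^ 2 ≤ muInfty A B C D * ∑' k, ‖w k‖ ^ 2 := by
  obtain ⟨K, hK, hout⟩ := exists_output_energy_bound (a := A.euclideanMap)
    (Matrix.tendsto_norm_euclideanMap_pow hA)
    B.euclideanMap C.euclideanMap D.euclideanMap
  rcases (tsum_nonneg fun k => sq_nonneg ‖w k‖).eq_or_lt with h0 | hpos
  · rw [← h0, mul_zero]
    refine Real.tsum_le_of_sum_range_le (fun _ => by positivity) fun N => (hout _ _ _ h N).trans ?_
    have := hw.sum_le_tsum (Finset.range N) fun _ _ => by positivity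
    rw [hx0, norm_zero]
    nlinarith
  set σ : ℝ := ∑' k, ‖w k‖ ^ 2 with hσ
  set s : ℂ := (((√σ)⁻¹ : ℝ) : ℂ) with hs
  have hs2 : ‖s‖ ^ 2 = σ⁻¹ := by
    rw [hs, Complex.norm_real, Real.norm_eq_abs, sq_abs, inv_pow, Real.sq_sqrt hpos.le]
  have hsc : ∀ {ι : Type} [Fintype ι] (v : EuclideanSpace ℂ ι),
      ∑ i, ‖(s • v).ofLp i‖ ^ 2 = σ⁻¹ * ‖v‖ ^ 2 := fun v => by
    rw [← EuclideanSpace.norm_sq_eq, norm_smul, mul_pow, hs2]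
  rw [← div_le_iff₀ hpos, div_eq_inv_mul]
  refine le_csSup ⟨K, ?_⟩ ⟨fun k => (s • w k).ofLp, fun k => (s • x k).ofLp,
    fun k => (s • z k).ofLp, ?_, ?_, ?_, fun k => ?_, fun k => ?_, ?_⟩
  · rintro r ⟨w', x', z', hsum, htsum, h0, hx', hz', rfl⟩
    have htr : IsTrajectory A.euclideanMap B.euclideanMap C.euclideanMap D.euclideanMap
        (fun k => WithLp.toLp 2 (x' k)) (fun k => WithLp.toLp 2 (w' k))
        (fun k => WithLp.toLp 2 (z' k)) :=
      ⟨fun k => by rw [hx']; rfl, fun k => by rw [hz']; rfl⟩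
    refine Real.tsum_le_of_sum_range_le (fun _ => by positivity) fun N => ?_
    have h1 := hout _ _ _ htr N
    simp only [h0, EuclideanSpace.norm_sq_eq] at h1
    have h2 := hsum.sum_le_tsum (Finset.range N) fun _ _ => by positivity
    rw [htsum] at h2
    have h3 : ∑ i : Fin n, ‖(0 : Fin n → ℂ) i‖ ^ 2 = 0 := by simp
    rw [h3, zero_add] at h1
    exact h1.trans (mul_le_of_le_one_right hK h2)
  · simpa only [hsc] using hw.mul_left σ⁻¹
  · simp only [hsc]
    rw [tsum_mul_left, ← hσ, inv_mul_cancel₀ hpos.ne']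
  · simp [hx0]
  · beta_reduce
    rw [h.state, smul_add, ← map_smul, ← map_smul]; rfl
  · beta_reduce
    rw [h.output, smul_add, ← map_smul, ← map_smul]; rfl
  · simp only [hsc]
    rw [tsum_mul_left]

theorem muInfty_lt_one_of_gain {n m p : ℕ} {A : Matrix (Fin n) (Fin n) ℂ}
    {B : Matrix (Fin n) (Fin m) ℂ} {C : Matrix (Fin p) (Fin n) ℂ} {D : Matrix (Fin p) (Fin m) ℂ}
    {ρ : ℝ} (hρ0 : 0 ≤ ρ) (hρ : ρ < 1)
    (h : ∀ x w z, IsTrajectory A.euclideanMap B.euclideanMap C.euclideanMap D.euclideanMap x w z →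
      x 0 = 0 → (Summable fun k => ‖w k‖ ^ 2) → ∑' k, ‖z k‖ ^ 2 ≤ ρ * ∑' k, ‖w k‖ ^ 2) :
    muInfty A B C D < 1 := by
  refine (Real.sSup_le ?_ hρ0).trans_lt hρ
  rintro r ⟨w, x, z, hsum, htsum, h0, hx, hz, rfl⟩
  have h1 := h (fun k => WithLp.toLp 2 (x k)) (fun k => WithLp.toLp 2 (w k))
    (fun k => WithLp.toLp 2 (z k)) ⟨fun k => by rw [hx]; rfl, fun k => by rw [hz]; rfl⟩
    (by simp [h0]) (by simpa only [EuclideanSpace.norm_sq_eq] using hsum)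
  simpa only [EuclideanSpace.norm_sq_eq, htsum, mul_one] using h1

end Matrix

/-- the strict discrete-time KYP lemma: `μ∞ < 1` iff the KYP LMI has a
Hermitian solution with strict inequality. -/
theorem kyp_lemma_strict {n m p : ℕ}
    (A : Matrix (Fin n) (Fin n) ℂ) (hA : spectralRadius ℂ A < 1)
    (B : Matrix (Fin n) (Fin m) ℂ) (C : Matrix (Fin p) (Fin n) ℂ)
    (D : Matrix (Fin p) (Fin m) ℂ) :
    muInfty A B C D < 1 ↔
      ∃ P : Matrix (Fin n) (Fin n) ℂ, P.IsHermitian ∧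
        (-(fromBlocks (Aᴴ * P * A - P) (Aᴴ * P * B) (Bᴴ * P * A) (Bᴴ * P * B) +
            fromBlocks (Cᴴ * C) (Cᴴ * D) (Dᴴ * C)
              (Dᴴ * D - (1 : Matrix (Fin m) (Fin m) ℂ)))).PosDef := by
  constructor
  · intro h
    obtain ⟨P, hP, hstrict⟩ := exists_strict_storage_of_gain_lt_one (a := A.euclideanMap)
      (Matrix.tendsto_norm_euclideanMap_pow hA) B.euclideanMap C.euclideanMap D.euclideanMap h
      fun x w z hz hx0 hw => gain_le_muInfty hA B C D hz hx0 hw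
    obtain ⟨Q, rfl⟩ := EquivLike.surjective (Matrix.toEuclideanCLM (n := Fin n) (𝕜 := ℂ)) P
    have hQ : Q.IsHermitian := by
      apply EquivLike.injective (Matrix.toEuclideanCLM (n := Fin n) (𝕜 := ℂ))
      rw [← Matrix.star_eq_conjTranspose, map_star]
      exact hP
    exact ⟨Q, hQ, (kyp_posDef_iff A B C D hQ).2 hstrict⟩
  · rintro ⟨P, hP, hpos⟩
    obtain ⟨ε, hε, h⟩ := (kyp_posDef_iff A B C D hP).1 hpos
    obtain ⟨ρ, hρ0, hρ, hgain⟩ := exists_gain_lt_one_of_strict_storage (a := A.euclideanMap)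
      (Matrix.tendsto_norm_euclideanMap_pow hA) B.euclideanMap C.euclideanMap D.euclideanMap
      P.euclideanMap hε h
    exact muInfty_lt_one_of_gain hρ0 hρ hgain
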